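/- For each μ > 0 and integer k ≥ 1 there exists ε > 0 such that for all p ∈ (0,1) the following holds: if 2 ≤ r ≤ k and V_1,…,V_r are pairwise disjoint vertex sets in an (ε,p,k−1,2k−2)-pseudorandom graph G on n vertices with |V_i| ≥ μ p^{k−i} n for each 1 ≤ i ≤ r, then the number of copies of K_r with exactly one vertex in each V_i equals (1 ± μ) · p^{C(r,2)} · |V_1|·…·|V_r|, where C(r,2) = r(r−1)/2. -/

import Mathlib

open scoped Classical

/-- Number of edges of `G` with one endpoint in `A` and the other in `B`. -/
noncomputable def eBetween {V : Type*} (G : SimpleGraph V) (A B : Finset V) : ℕ :=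
  ((A ×ˢ B).filter fun e => G.Adj e.1 e.2).card

/-- `G` is `(ε,p,k,ℓ)`-pseudorandom. -/
def Pseudorandom {V : Type*} [Fintype V] (G : SimpleGraph V) (ε p : ℝ) (k l : ℕ) : Prop :=
  ∀ X Y : Finset V, Disjoint X Y →
    ε * p ^ k * (Fintype.card V : ℝ) ≤ (X.card : ℝ) →
    ε * p ^ l * (Fintype.card V : ℝ) ≤ (Y.card : ℝ) →
    |(eBetween G X Y : ℝ) - p * X.card * Y.card| < ε * p * X.card * Y.card

/-- The number of copies of `K_r` with exactly one vertex in each `Vs i`. -/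
noncomputable def crossCliqueCount {V : Type*} (G : SimpleGraph V) {r : ℕ}
    (Vs : Fin r → Finset V) : ℕ :=
  Nat.card {f : Fin r → V // (∀ i, f i ∈ Vs i) ∧ ∀ i j, i ≠ j → G.Adj (f i) (f j)}

/-!
The cliques whose first vertex is `v ∈ V₁` are the cliques across the neighbourhoods of `v` in
`V₂, …, Vᵣ`. By pseudorandomness all but at most `2 (r - 1) ε p ^ (2k - 2) n` vertices `v ∈ V₁` have
about `p |Vᵢ|` neighbours in every `Vᵢ`; for those, the shift of indices makes the neighbourhoods
large enough for induction on `r`, which gives about `p ^ (r - 1)` times the expected number of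
cliques across `V₂, …, Vᵣ`. An exceptional `v` lies in at most as many cliques as there are across
`V₂, …, Vᵣ`, again by induction about the expected number. This loses a factor `p ^ (-(r - 1))`,
which is compensated because the exceptional vertices are an `O(ε p ^ (k - 1))` fraction of `V₁`
and `r ≤ k`.
-/

open Filter
open scoped Finset Topology

/-- The relation `a = (1 ± μ) b`. The absolute value form makes errors combine by the triangle
inequality, with no upper bound on `μ`. -/
def IsApprox (μ a b : ℝ) : Prop :=
  |a - b| ≤ μ * b

lemma isApprox_iff {μ a b : ℝ} : IsApprox μ a b ↔ (1 - μ) * b ≤ a ∧ a ≤ (1 + μ) * b := by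
  rw [IsApprox, abs_sub_le_iff]
  constructor <;> rintro ⟨_, _⟩ <;> constructor <;> linarith

namespace IsApprox

variable {μ ν a b c d : ℝ}

lemma mono (h : IsApprox μ a b) (hμν : μ ≤ ν) (hb : 0 ≤ b) : IsApprox ν a b :=
  h.trans (mul_le_mul_of_nonneg_right hμν hb)

lemma trans (hab : IsApprox μ a b) (hbc : IsApprox ν b c) (hμ : 0 ≤ μ) :
    IsApprox ((1 + μ) * (1 + ν) - 1) a c :=
  calc |a - c| ≤ |a - b| + |b - c| := abs_sub_le a b c
    _ ≤ μ * b + ν * c := add_le_add hab hbc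
    _ ≤ μ * ((1 + ν) * c) + ν * c := by gcongr; exact (isApprox_iff.1 hbc).2
    _ = ((1 + μ) * (1 + ν) - 1) * c := by ring

lemma const_mul (h : IsApprox μ a b) (hc : 0 ≤ c) : IsApprox μ (c * a) (c * b) :=
  calc |c * a - c * b| = c * |a - b| := by rw [← mul_sub, abs_mul, abs_of_nonneg hc]
    _ ≤ c * (μ * b) := mul_le_mul_of_nonneg_left h hc
    _ = μ * (c * b) := by ring

lemma mul (hab : IsApprox μ a b) (hcd : IsApprox ν c d) (hb : 0 ≤ b) (hd : 0 ≤ d) :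
    IsApprox ((1 + μ) * (1 + ν) - 1) (a * c) (b * d) :=
  calc |a * c - b * d| = |(a - b) * (c - d) + (a - b) * d + b * (c - d)| := by ring_nf
    _ ≤ |a - b| * |c - d| + |a - b| * d + b * |c - d| := by
      refine (abs_add_three _ _ _).trans_eq ?_
      rw [abs_mul, abs_mul, abs_mul, abs_of_nonneg hb, abs_of_nonneg hd]
    _ ≤ μ * b * (ν * d) + μ * b * d + b * (ν * d) := by
      have : 0 ≤ μ * b := (abs_nonneg _).trans hab
      gcongr <;> assumption
    _ = ((1 + μ) * (1 + ν) - 1) * (b * d) := by ring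

lemma prod {ι : Type*} {s : Finset ι} {f g : ι → ℝ} (h : ∀ i ∈ s, IsApprox μ (f i) (g i))
    (hg : ∀ i ∈ s, 0 ≤ g i) : IsApprox ((1 + μ) ^ #s - 1) (∏ i ∈ s, f i) (∏ i ∈ s, g i) := by
  induction s using Finset.cons_induction with
  | empty => simp [IsApprox]
  | cons i s hi ih =>
    rw [Finset.forall_mem_cons] at h hg
    rw [Finset.prod_cons, Finset.prod_cons, Finset.card_cons, pow_succ']
    simpa using h.1.mul (ih h.2 hg.2) hg.1 (Finset.prod_nonneg hg.2)

lemma sum_of_exceptional {α : Type*} {s : Finset α} {P : α → Prop} {f : α → ℝ} {m : ℝ}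
    (hμ : 0 ≤ μ) (hm : 0 ≤ m) (hP : ∀ x ∈ s, P x → IsApprox μ (f x) m)
    (hc : ∀ x ∈ s, |f x - m| ≤ c) (hcard : #{x ∈ s | ¬ P x} * c ≤ ν * (#s * m)) :
    IsApprox (μ + ν) (∑ x ∈ s, f x) (#s * m) := by
  have htypical : ∑ x ∈ s with P x, |f x - m| ≤ μ * (#s * m) :=
    calc ∑ x ∈ s with P x, |f x - m| ≤ #{x ∈ s | P x} • (μ * m) :=
          Finset.sum_le_card_nsmul _ _ _ fun x hx =>
            hP x (Finset.mem_filter.1 hx).1 (Finset.mem_filter.1 hx).2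
      _ ≤ #s • (μ * m) := by gcongr; exact Finset.filter_subset _ _
      _ = μ * (#s * m) := by rw [nsmul_eq_mul]; ring
  have hexceptional : ∑ x ∈ s with ¬ P x, |f x - m| ≤ ν * (#s * m) := by
    refine (Finset.sum_le_card_nsmul _ _ c fun x hx => hc x (Finset.mem_filter.1 hx).1).trans ?_
    rwa [nsmul_eq_mul]
  calc |∑ x ∈ s, f x - #s * m| = |∑ x ∈ s, (f x - m)| := by
        rw [Finset.sum_sub_distrib, Finset.sum_const, nsmul_eq_mul]
    _ ≤ ∑ x ∈ s, |f x - m| := Finset.abs_sum_le_sum_abs _ _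
    _ = ∑ x ∈ s with P x, |f x - m| + ∑ x ∈ s with ¬ P x, |f x - m| :=
        (Finset.sum_filter_add_sum_filter_not s P _).symm
    _ ≤ (μ + ν) * (#s * m) := by rw [add_mul]; exact add_le_add htypical hexceptional

end IsApprox

section Link

variable {V ι : Type*}

/-- The family of neighbourhoods of the vertex `v` inside the sets of the family `Vs`, where the
remaining vertices of a clique through `v` must lie. -/
noncomputable def link (G : SimpleGraph V) (v : V) (Vs : ι → Finset V) (i : ι) : Finset V :=
  {w ∈ Vs i | G.Adj v w}

lemma link_subset (G : SimpleGraph V) (v : V) (Vs : ι → Finset V) (i : ι) :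
    link G v Vs i ⊆ Vs i :=
  Finset.filter_subset _ _

/-- The vertex `v` has the expected number of neighbours, up to a factor `1 ± ε`, in each set of the
family `Vs`, when `p` is the edge density. -/
def IsTypical (G : SimpleGraph V) (ε p : ℝ) (Vs : ι → Finset V) (v : V) : Prop :=
  ∀ i, IsApprox ε #(link G v Vs i) (p * #(Vs i))

end Link

section Pseudorandom

variable {V : Type*} {G : SimpleGraph V} {ε p : ℝ} {k l : ℕ}

lemma eBetween_eq_sum_card_filter (G : SimpleGraph V) (X Y : Finset V) :
    eBetween G X Y = ∑ y ∈ Y, #{x ∈ X | G.Adj y x} := by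
  simp only [eBetween, Finset.card_filter, Finset.sum_product_right, G.adj_comm]

lemma eBetween_sub_eq_sum (G : SimpleGraph V) (p : ℝ) (X Y : Finset V) :
    eBetween G X Y - p * #X * #Y = ∑ y ∈ Y, ((#{x ∈ X | G.Adj y x} : ℝ) - p * #X) := by
  rw [Finset.sum_sub_distrib, Finset.sum_const, nsmul_eq_mul, eBetween_eq_sum_card_filter,
    Nat.cast_sum, mul_comm (#Y : ℝ)]

variable [Fintype V]

lemma Pseudorandom.card_le_of_le_abs_sum (hG : Pseudorandom G ε p k l) {X Y : Finset V}
    (hXY : Disjoint X Y) (hX : ε * p ^ k * Fintype.card V ≤ #X)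
    (hY : #Y • (ε * (p * #X)) ≤ |∑ y ∈ Y, ((#{x ∈ X | G.Adj y x} : ℝ) - p * #X)|) :
    #Y ≤ ε * p ^ l * Fintype.card V := by
  by_contra! hlt
  refine (hG X Y hXY hX hlt.le).not_ge ?_
  rw [eBetween_sub_eq_sum]
  refine le_trans (le_of_eq ?_) hY
  rw [nsmul_eq_mul]
  ring

lemma Pseudorandom.card_not_isApprox_le (hG : Pseudorandom G ε p k l) {X Y : Finset V}
    (hXY : Disjoint X Y) (hX : ε * p ^ k * Fintype.card V ≤ #X) :
    #{y ∈ Y | ¬ IsApprox ε #{x ∈ X | G.Adj y x} (p * #X)} ≤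
      2 * (ε * p ^ l * Fintype.card V) := by
  set excess : V → ℝ := fun y => #{x ∈ X | G.Adj y x} - p * #X
  set high : Finset V := {y ∈ Y | ε * (p * #X) < excess y}
  set low : Finset V := {y ∈ Y | ε * (p * #X) < -excess y}
  have hhigh : #high ≤ ε * p ^ l * Fintype.card V :=
    hG.card_le_of_le_abs_sum (hXY.mono_right (Finset.filter_subset _ _)) hX <|
      (Finset.card_nsmul_le_sum _ _ _ fun y hy => (Finset.mem_filter.1 hy).2.le).trans
        (le_abs_self _)
  have hlow : #low ≤ ε * p ^ l * Fintype.card V := by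
    refine hG.card_le_of_le_abs_sum (hXY.mono_right (Finset.filter_subset _ _)) hX <|
      le_trans ?_ (neg_le_abs _)
    rw [← Finset.sum_neg_distrib]
    exact Finset.card_nsmul_le_sum _ _ _ fun y hy => (Finset.mem_filter.1 hy).2.le
  have hsplit : ({y ∈ Y | ¬ IsApprox ε #{x ∈ X | G.Adj y x} (p * #X)} : Finset V) =
      high ∪ low := by
    simp only [IsApprox, not_le, lt_abs, high, low, excess, Finset.filter_or]
  have hcard : (#(high ∪ low) : ℝ) ≤ #high + #low := mod_cast Finset.card_union_le high low
  rw [hsplit]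
  linarith

lemma Pseudorandom.card_not_isTypical_le {ι : Type*} [Fintype ι] (hG : Pseudorandom G ε p k l)
    {Xs : ι → Finset V} {Y : Finset V} (hXY : ∀ i, Disjoint (Xs i) Y)
    (hX : ∀ i, ε * p ^ k * Fintype.card V ≤ #(Xs i)) :
    #{y ∈ Y | ¬ IsTypical G ε p Xs y} ≤
      Fintype.card ι * (2 * (ε * p ^ l * Fintype.card V)) := by
  set atypical : ι → Finset V := fun i =>
    {y ∈ Y | ¬ IsApprox ε #(link G y Xs i) (p * #(Xs i))}
  have hunion : ({y ∈ Y | ¬ IsTypical G ε p Xs y} : Finset V) ⊆ Finset.univ.biUnion atypical := by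
    intro y hy
    simpa [IsTypical, atypical] using hy
  calc (#{y ∈ Y | ¬ IsTypical G ε p Xs y} : ℝ) ≤ ∑ i, (#(atypical i) : ℝ) :=
        mod_cast (Finset.card_le_card hunion).trans Finset.card_biUnion_le
    _ ≤ Finset.card Finset.univ • (2 * (ε * p ^ l * Fintype.card V)) :=
        Finset.sum_le_card_nsmul _ _ _ fun i _ => hG.card_not_isApprox_le (hXY i) (hX i)
    _ = Fintype.card ι * (2 * (ε * p ^ l * Fintype.card V)) := nsmul_eq_mul _ _

end Pseudorandom

section CliqueCount

variable {V : Type*} {r : ℕ}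

/-- The vertices `f i` form a clique with `f i ∈ Vs i`: the objects that `crossCliqueCount`
counts. -/
def IsCrossClique (G : SimpleGraph V) (Vs : Fin r → Finset V) (f : Fin r → V) : Prop :=
  (∀ i, f i ∈ Vs i) ∧ ∀ i j, i ≠ j → G.Adj (f i) (f j)

lemma isCrossClique_succ {G : SimpleGraph V} {Vs : Fin (r + 1) → Finset V}
    {f : Fin (r + 1) → V} :
    IsCrossClique G Vs f ↔
      f 0 ∈ Vs 0 ∧ IsCrossClique G (link G (f 0) (Fin.tail Vs)) (Fin.tail f) := by
  simp only [IsCrossClique, link, Fin.tail, Fin.forall_fin_succ, Finset.mem_filter, ne_eq,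
    Fin.succ_inj, (Fin.succ_ne_zero _).symm, Fin.succ_ne_zero, G.adj_comm _ (f 0)]
  grind

lemma crossCliqueCount_zero (G : SimpleGraph V) (Vs : Fin 0 → Finset V) :
    crossCliqueCount G Vs = 1 := by
  simp [crossCliqueCount]

lemma crossCliqueCount_mono [Finite V] (G : SimpleGraph V) {Vs Ws : Fin r → Finset V}
    (h : ∀ i, Vs i ⊆ Ws i) : crossCliqueCount G Vs ≤ crossCliqueCount G Ws :=
  Nat.card_le_card_of_injective (Subtype.map id fun _ hf => ⟨fun i => h i (hf.1 i), hf.2⟩)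
    (Subtype.map_injective _ Function.injective_id)

lemma crossCliqueCount_succ [Finite V] (G : SimpleGraph V) (Vs : Fin (r + 1) → Finset V) :
    crossCliqueCount G Vs = ∑ v ∈ Vs 0, crossCliqueCount G (link G v (Fin.tail Vs)) := by
  let splitFirst : {f // IsCrossClique G Vs f} ≃
      Σ v : Vs 0, {f // IsCrossClique G (link G v (Fin.tail Vs)) f} :=
    { toFun f := ⟨⟨f.1 0, (isCrossClique_succ.1 f.2).1⟩, Fin.tail f.1,
        (isCrossClique_succ.1 f.2).2⟩
      invFun x := ⟨Fin.cons x.1.1 x.2.1, isCrossClique_succ.2 ⟨x.1.2, x.2.2⟩⟩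
      left_inv f := Subtype.ext (Fin.cons_self_tail f.1)
      right_inv _ := rfl }
  rw [← Finset.sum_coe_sort]
  exact (Nat.card_congr splitFirst).trans Nat.card_sigma

/-- The expected number of cliques across `Vs` at edge density `p`. -/
noncomputable def expectedCliqueCount (p : ℝ) (Vs : Fin r → Finset V) : ℝ :=
  p ^ r.choose 2 * ∏ i, (#(Vs i) : ℝ)

lemma expectedCliqueCount_nonneg {p : ℝ} (hp : 0 ≤ p) (Vs : Fin r → Finset V) :
    0 ≤ expectedCliqueCount p Vs := by
  unfold expectedCliqueCount
  positivity

lemma expectedCliqueCount_succ (p : ℝ) (Vs : Fin (r + 1) → Finset V) :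
    expectedCliqueCount p Vs = #(Vs 0) * (p ^ r * expectedCliqueCount p (Fin.tail Vs)) := by
  simp only [expectedCliqueCount, Fin.tail, Fin.prod_univ_succ, Nat.choose_succ_succ' r 1,
    Nat.choose_one_right, pow_add]
  ring

lemma IsTypical.isApprox_expectedCliqueCount_link {G : SimpleGraph V} {ε p : ℝ}
    {Vs : Fin r → Finset V} {v : V} (hp : 0 ≤ p) (hv : IsTypical G ε p Vs v) :
    IsApprox ((1 + ε) ^ r - 1) (expectedCliqueCount p (link G v Vs))
      (p ^ r * expectedCliqueCount p Vs) := by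
  have hprod : IsApprox ((1 + ε) ^ r - 1) (∏ i, (#(link G v Vs i) : ℝ))
      (∏ i, (p * #(Vs i) : ℝ)) := by
    simpa using IsApprox.prod (s := Finset.univ) (fun i _ => hv i) fun i _ => by positivity
  have hexpected : p ^ r * expectedCliqueCount p Vs =
      p ^ r.choose 2 * ∏ i, (p * #(Vs i) : ℝ) := by
    rw [expectedCliqueCount, Finset.prod_mul_distrib, Finset.prod_const, Finset.card_univ,
      Fintype.card_fin]
    ring
  rw [hexpected]
  exact hprod.const_mul (by positivity)

lemma isApprox_crossCliqueCount_of_few_exceptional [Finite V] {G : SimpleGraph V} {θ p : ℝ}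
    {Vs : Fin (r + 1) → Finset V} {P : V → Prop} (hp : 0 ≤ p) (hp1 : p ≤ 1) (hθ : 0 ≤ θ)
    (hP : ∀ v ∈ Vs 0, P v → IsApprox θ (crossCliqueCount G (link G v (Fin.tail Vs)))
      (p ^ r * expectedCliqueCount p (Fin.tail Vs)))
    (htail : IsApprox 1 (crossCliqueCount G (Fin.tail Vs)) (expectedCliqueCount p (Fin.tail Vs)))
    (hcard : 2 * #{v ∈ Vs 0 | ¬ P v} ≤ θ * (p ^ r * #(Vs 0))) :
    IsApprox (2 * θ) (crossCliqueCount G Vs) (expectedCliqueCount p Vs) := by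
  set E : ℝ := expectedCliqueCount p (Fin.tail Vs)
  have hE : 0 ≤ E := expectedCliqueCount_nonneg hp _
  have hpE : p ^ r * E ≤ 2 * E :=
    mul_le_mul_of_nonneg_right ((pow_le_one₀ hp hp1).trans one_le_two) hE
  have hlink (v : V) : (crossCliqueCount G (link G v (Fin.tail Vs)) : ℝ) ≤ 2 * E :=
    calc (crossCliqueCount G (link G v (Fin.tail Vs)) : ℝ) ≤ crossCliqueCount G (Fin.tail Vs) :=
          mod_cast crossCliqueCount_mono G (link_subset G v _)
      _ ≤ (1 + 1) * E := (isApprox_iff.1 htail).2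
      _ = 2 * E := by ring
  rw [crossCliqueCount_succ, Nat.cast_sum, expectedCliqueCount_succ, two_mul]
  refine IsApprox.sum_of_exceptional (c := 2 * E) hθ (by positivity) hP (fun v _ =>
    abs_sub_le_of_nonneg_of_le (Nat.cast_nonneg _) (hlink v) (by positivity) hpE) ?_
  calc #{v ∈ Vs 0 | ¬ P v} * (2 * E) = 2 * #{v ∈ Vs 0 | ¬ P v} * E := by ring
    _ ≤ θ * (p ^ r * #(Vs 0)) * E := by gcongr
    _ = θ * (#(Vs 0) * (p ^ r * E)) := by ring

end CliqueCount

/-- The hypotheses of the clique counting proposition on the sets `V₁, …, Vᵣ`. The paper's bound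
`μ p ^ (k - i) n` for `|Vᵢ|` has exponent `k - 1 - i` because indices start at `0`; the subtraction
is not truncated when `r ≤ k`. -/
structure IsCliqueAdmissible {V : Type*} [Fintype V] (μ p : ℝ) (k : ℕ) {r : ℕ}
    (Vs : Fin r → Finset V) : Prop where
  disjoint : ∀ i j, i ≠ j → Disjoint (Vs i) (Vs j)
  le_card : ∀ i : Fin r, μ * p ^ (k - 1 - i.val) * Fintype.card V ≤ #(Vs i)

section CliqueAdmissible

variable {V : Type*} [Fintype V] {G : SimpleGraph V} {μ p ε : ℝ} {k r : ℕ}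
  {Vs : Fin (r + 1) → Finset V}

lemma IsCliqueAdmissible.of_subset_tail {c : ℝ} {Ws : Fin r → Finset V}
    (h : IsCliqueAdmissible μ p k Vs) (hp : 0 ≤ p) (hc : 0 ≤ c) (hrk : r + 1 ≤ k)
    (hsub : ∀ i, Ws i ⊆ Fin.tail Vs i)
    (hcard : ∀ i, c * (p * #(Fin.tail Vs i)) ≤ #(Ws i)) : IsCliqueAdmissible (c * μ) p k Ws where
  disjoint i j hij :=
    (h.disjoint _ _ fun e => hij (Fin.succ_injective _ e)).mono (hsub i) (hsub j)
  le_card i := by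
    have hexp : k - 1 - i.val = (k - 1 - i.succ.val) + 1 := by
      rw [Fin.val_succ]
      omega
    calc c * μ * p ^ (k - 1 - i.val) * Fintype.card V
        = c * (p * (μ * p ^ (k - 1 - i.succ.val) * Fintype.card V)) := by
          rw [hexp, pow_succ]
          ring
      _ ≤ c * (p * #(Fin.tail Vs i)) := by
          gcongr
          exact h.le_card i.succ
      _ ≤ #(Ws i) := hcard i

lemma IsCliqueAdmissible.tail (h : IsCliqueAdmissible μ p k Vs) (hp : 0 ≤ p) (hp1 : p ≤ 1)
    (hrk : r + 1 ≤ k) : IsCliqueAdmissible (1 / 2 * μ) p k (Fin.tail Vs) :=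
  h.of_subset_tail hp one_half_pos.le hrk (fun _ => subset_rfl) fun i => by
    have : p * #(Fin.tail Vs i) ≤ #(Fin.tail Vs i) :=
      mul_le_of_le_one_left (Nat.cast_nonneg _) hp1
    linarith [(Nat.cast_nonneg _ : (0 : ℝ) ≤ #(Fin.tail Vs i))]

lemma IsCliqueAdmissible.link (h : IsCliqueAdmissible μ p k Vs) (hp : 0 ≤ p) (hε : ε ≤ 1 / 2)
    (hrk : r + 1 ≤ k) {v : V} (hv : IsTypical G ε p (Fin.tail Vs) v) :
    IsCliqueAdmissible (1 / 2 * μ) p k (link G v (Fin.tail Vs)) :=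
  h.of_subset_tail hp one_half_pos.le hrk (link_subset G v _) fun i =>
    (mul_le_mul_of_nonneg_right (by linarith) (by positivity)).trans (isApprox_iff.1 (hv i)).1

lemma IsCliqueAdmissible.card_not_isTypical_le (h : IsCliqueAdmissible μ p k Vs)
    (hG : Pseudorandom G ε p (k - 1) (2 * k - 2)) (hp : 0 ≤ p) (hp1 : p ≤ 1) (hε : 0 ≤ ε)
    (hεμ : ε ≤ μ) (hrk : r + 1 ≤ k) :
    μ * #{v ∈ Vs 0 | ¬ IsTypical G ε p (Fin.tail Vs) v} ≤ 2 * r * ε * (p ^ r * #(Vs 0)) := by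
  have hμ : 0 ≤ μ := hε.trans hεμ
  have hlarge (i : Fin r) : ε * p ^ (k - 1) * Fintype.card V ≤ #(Fin.tail Vs i) :=
    calc ε * p ^ (k - 1) * Fintype.card V
        ≤ μ * p ^ (k - 1 - i.succ.val) * Fintype.card V := by
          have : p ^ (k - 1) ≤ p ^ (k - 1 - i.succ.val) :=
            pow_le_pow_of_le_one hp hp1 (Nat.sub_le _ _)
          gcongr
      _ ≤ #(Fin.tail Vs i) := h.le_card i.succ
  have hfew : #{v ∈ Vs 0 | ¬ IsTypical G ε p (Fin.tail Vs) v} ≤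
      r * (2 * (ε * p ^ (2 * k - 2) * Fintype.card V)) := by
    simpa only [Fintype.card_fin] using hG.card_not_isTypical_le (Xs := Fin.tail Vs)
      (fun i => h.disjoint i.succ 0 (Fin.succ_ne_zero i)) hlarge
  have hpow : p ^ (2 * k - 2) ≤ p ^ r * p ^ (k - 1) := by
    rw [← pow_add]
    exact pow_le_pow_of_le_one hp hp1 (by omega)
  calc μ * #{v ∈ Vs 0 | ¬ IsTypical G ε p (Fin.tail Vs) v}
      ≤ μ * (r * (2 * (ε * (p ^ r * p ^ (k - 1)) * Fintype.card V))) := by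
        refine mul_le_mul_of_nonneg_left (hfew.trans ?_) hμ
        gcongr
    _ = 2 * r * ε * (p ^ r * (μ * p ^ (k - 1) * Fintype.card V)) := by ring
    _ ≤ 2 * r * ε * (p ^ r * #(Vs 0)) := by
        gcongr
        exact h.le_card 0

lemma Pseudorandom.isApprox_crossCliqueCount_succ {δ θ : ℝ}
    (hG : Pseudorandom G ε p (k - 1) (2 * k - 2)) (hp : 0 ≤ p) (hp1 : p ≤ 1) (hμ : 0 < μ)
    (hδ : 0 ≤ δ) (hδ1 : δ ≤ 1) (hε : 0 ≤ ε) (hε2 : ε ≤ 1 / 2) (hεμ : ε ≤ μ)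
    (hεr : 4 * r * ε ≤ θ * μ) (hδε : (1 + δ) * (1 + ε) ^ r ≤ 1 + θ) (hrk : r + 1 ≤ k)
    (ih : ∀ Ws : Fin r → Finset V, IsCliqueAdmissible (1 / 2 * μ) p k Ws →
      IsApprox δ (crossCliqueCount G Ws) (expectedCliqueCount p Ws))
    (hVs : IsCliqueAdmissible μ p k Vs) :
    IsApprox (2 * θ) (crossCliqueCount G Vs) (expectedCliqueCount p Vs) := by
  have hE : 0 ≤ expectedCliqueCount p (Fin.tail Vs) := expectedCliqueCount_nonneg hp _
  have hθ : 0 ≤ θ := nonneg_of_mul_nonneg_left ((by positivity : 0 ≤ 4 * r * ε).trans hεr) hμ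
  refine isApprox_crossCliqueCount_of_few_exceptional (P := IsTypical G ε p (Fin.tail Vs))
    hp hp1 hθ (fun v _ hv => ?_) ((ih _ (hVs.tail hp hp1 hrk)).mono hδ1 hE) ?_
  · have hcount := ih _ (hVs.link hp hε2 hrk hv)
    refine (hcount.trans (hv.isApprox_expectedCliqueCount_link hp) hδ).mono ?_ (by positivity)
    linarith
  · have hfew := hVs.card_not_isTypical_le hG hp hp1 hε hεμ hrk
    refine le_of_mul_le_mul_left ?_ hμ
    calc μ * (2 * #{v ∈ Vs 0 | ¬ IsTypical G ε p (Fin.tail Vs) v})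
        = 2 * (μ * #{v ∈ Vs 0 | ¬ IsTypical G ε p (Fin.tail Vs) v}) := by ring
      _ ≤ 2 * (2 * r * ε * (p ^ r * #(Vs 0))) := by gcongr
      _ = 4 * r * ε * (p ^ r * #(Vs 0)) := by ring
      _ ≤ θ * μ * (p ^ r * #(Vs 0)) := by gcongr
      _ = μ * (θ * (p ^ r * #(Vs 0))) := by ring

end CliqueAdmissible

theorem eventually_isApprox_crossCliqueCount {k r : ℕ} (hrk : r ≤ k) {η μ : ℝ} (hη : 0 < η)
    (hμ : 0 < μ) :
    ∀ᶠ ε : ℝ in 𝓝[>] 0, ∀ p : ℝ, 0 ≤ p → p ≤ 1 →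
      ∀ (V : Type*) [Fintype V] (G : SimpleGraph V), Pseudorandom G ε p (k - 1) (2 * k - 2) →
        ∀ Vs : Fin r → Finset V, IsCliqueAdmissible μ p k Vs →
          IsApprox η (crossCliqueCount G Vs) (expectedCliqueCount p Vs) := by
  induction r generalizing η μ with
  | zero =>
    refine Eventually.of_forall fun ε p _ _ V _ G _ Vs _ => ?_
    simp [IsApprox, expectedCliqueCount, crossCliqueCount_zero, hη.le]
  | succ r ih =>
    set δ : ℝ := min 1 (η / 4)
    have hδ : 0 < δ := by positivity
    have hδη : (1 + δ) * (1 + 0) ^ r < 1 + η / 2 := by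
      rw [add_zero, one_pow, mul_one]
      linarith [min_le_right 1 (η / 4)]
    have hpow : ∀ᶠ ε : ℝ in 𝓝[>] 0, (1 + δ) * (1 + ε) ^ r < 1 + η / 2 :=
      nhdsWithin_le_nhds <| (Continuous.tendsto (by fun_prop) 0).eventually_lt_const hδη
    have hlin : ∀ᶠ ε : ℝ in 𝓝[>] 0, 4 * r * ε < η / 2 * μ :=
      nhdsWithin_le_nhds <| (Continuous.tendsto (by fun_prop) 0).eventually_lt_const
        (by rw [mul_zero]; positivity)
    filter_upwards [ih (Nat.le_of_succ_le hrk) hδ (mul_pos one_half_pos hμ), hpow, hlin,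
      Ioc_mem_nhdsGT one_half_pos, Ioc_mem_nhdsGT hμ]
      with ε hih hpow hlin ⟨hε, hε2⟩ ⟨_, hεμ⟩ p hp hp1 V _ G hG Vs hVs
    rw [← mul_div_cancel₀ η two_ne_zero]
    exact hG.isApprox_crossCliqueCount_succ hp hp1 hμ hδ.le (min_le_left _ _) hε.le hε2 hεμ hlin.le
      hpow.le hrk (hih p hp hp1 V G hG) hVs

/-- the clique counting proposition. -/
theorem stmt5 (μ : ℝ) (hμ : 0 < μ) (k : ℕ) (hk : 1 ≤ k) :
    ∃ ε : ℝ, 0 < ε ∧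
      ∀ (p : ℝ), 0 < p → p < 1 →
        ∀ (V : Type) [Fintype V] (G : SimpleGraph V),
          Pseudorandom G ε p (k - 1) (2 * k - 2) →
          ∀ (r : ℕ), 2 ≤ r → r ≤ k →
            ∀ Vs : Fin r → Finset V,
              (∀ i j, i ≠ j → Disjoint (Vs i) (Vs j)) →
              (∀ i : Fin r, μ * p ^ (k - 1 - i.val) * (Fintype.card V : ℝ) ≤ ((Vs i).card : ℝ)) →
              (1 - μ) * p ^ (r.choose 2) * ∏ i, ((Vs i).card : ℝ) ≤ (crossCliqueCount G Vs : ℝ) ∧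
              (crossCliqueCount G Vs : ℝ) ≤ (1 + μ) * p ^ (r.choose 2) * ∏ i, ((Vs i).card : ℝ) := by
  have hev := (eventually_all_finset (Finset.range (k + 1))).2 fun r hr =>
    eventually_isApprox_crossCliqueCount (Finset.mem_range_succ_iff.1 hr) hμ hμ
  obtain ⟨ε, hcount, hε⟩ := (hev.and self_mem_nhdsWithin).exists
  refine ⟨ε, hε, fun p hp hp1 V _ G hG r _ hrk Vs hdisj hcard => ?_⟩
  have happrox := hcount r (Finset.mem_range_succ_iff.2 hrk) p hp.le hp1.le V G hG Vs
    ⟨hdisj, hcard⟩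
  simpa only [isApprox_iff, expectedCliqueCount, ← mul_assoc] using happrox
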